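/- Let k be a field of characteristic 0 and n = 6. The k-vector space R_{(1,1,1,1,1,1)} of SL₂(k)-invariant multihomogeneous polynomials of multidegree (1,1,1,1,1,1) has dimension 5. (This is the degree 1 piece of the graded ring whose Proj is the Segre cubic threefold in ℙ⁴.) -/

import Mathlib

open MvPolynomial

/-- The polynomial ring `A = k[x_1, y_1, …, x_n, y_n]`: variable `(i, 0)` is `x_i`
and `(i, 1)` is `y_i`. -/
abbrev PtRing (k : Type) [CommRing k] (n : ℕ) := MvPolynomial (Fin n × Fin 2) k

/-- The bracket `[ab] = x_a y_b − x_b y_a`. -/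
noncomputable def bracket (k : Type) [CommRing k] (n : ℕ) (a b : Fin n) : PtRing k n :=
  X (a, 0) * X (b, 1) - X (b, 0) * X (a, 1)

/-- The graph monomial `m_Γ = ∏_{(a,b) ∈ Γ} [ab]` of a directed graph `Γ`,
viewed as a multiset of directed edges. -/
noncomputable def graphMonomial (k : Type) [CommRing k] (n : ℕ)
    (Γ : Multiset (Fin n × Fin n)) : PtRing k n :=
  (Γ.map fun e => bracket k n e.1 e.2).prod

/-- The `k`-algebra endomorphism of `A` induced by a `2×2` matrix `g = ((p,q),(r,s))`:
`x_i ↦ p·x_i + r·y_i` and `y_i ↦ q·x_i + s·y_i`. -/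
noncomputable def subst (k : Type) [CommRing k] (n : ℕ) (g : Matrix (Fin 2) (Fin 2) k) :
    PtRing k n →ₐ[k] PtRing k n :=
  aeval fun p =>
    if p.2 = 0 then C (g 0 0) * X (p.1, 0) + C (g 1 0) * X (p.1, 1)
    else C (g 0 1) * X (p.1, 0) + C (g 1 1) * X (p.1, 1)

/-- The valence vector of a directed graph: the `i`-th entry is the number of edges
(with multiplicity) having `i` as an endpoint. -/
def valence (n : ℕ) (Γ : Multiset (Fin n × Fin n)) : Fin n → ℕ :=
  fun i => (Γ.map Prod.fst).count i + (Γ.map Prod.snd).count i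

/-- `R_v`: the space of `SL₂(k)`-invariant multihomogeneous polynomials of multidegree `v`. -/
noncomputable def Rv (k : Type) [CommRing k] (n : ℕ) (v : Fin n → ℕ) :
    Submodule k (PtRing k n) :=
  (⨅ g : Matrix.SpecialLinearGroup (Fin 2) k,
      LinearMap.ker ((subst k n (g : Matrix (Fin 2) (Fin 2) k)).toLinearMap
        - (LinearMap.id : PtRing k n →ₗ[k] PtRing k n))) ⊓
  weightedHomogeneousSubmodule k (fun p : Fin n × Fin 2 => Finsupp.single p.1 1)
    (Finsupp.equivFunOnFinite.symm v)

/-!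
Adjoin to `n` points of multidegree `v` a last point of degree one. Merging it with a point `a` maps
`R_(v, 1)` to `R_(v + e_a)`; the kernel consists of the multiples of the bracket of the two points,
so it is a copy of `R_(v - e_a)`. The merging is surjective: inductively `R_(v + e_a)` is spanned by
graph monomials, as in Kempe's theorem, and a graph monomial lifts when one endpoint `a` of an edge
is moved to the last point. The spanning property passes to `R_(v, 1)`. For `v = (w, 1, …, 1)` and
`a` the first point, the dimensions thus satisfy the recursion of the ballot numbers.
-/

theorem exists_mem_graded_of_mul_mem {ι σ A : Type*} [DecidableEq ι] [AddMonoid ι]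
    [IsLeftCancelAdd ι] [Semiring A] [SetLike σ A] [AddSubmonoidClass σ A] [NoZeroDivisors A]
    (𝒜 : ι → σ) [GradedRing 𝒜] {a b : A} {i j : ι} (ha : a ∈ 𝒜 i) (ha0 : a ≠ 0)
    (hab : a * b ∈ 𝒜 j) (hb0 : b ≠ 0) : ∃ l, j = i + l ∧ b ∈ 𝒜 l := by
  classical
  let _ : AddLeftCancelMonoid ι := { ‹AddMonoid ι›, ‹IsLeftCancelAdd ι› with }
  have eq_add (l : ι) (hl : DirectSum.decompose 𝒜 b l ≠ 0) : j = i + l := by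
    by_contra hne
    have hzero := DirectSum.decompose_of_mem_ne 𝒜 hab hne
    rw [DirectSum.coe_decompose_mul_add_of_left_mem 𝒜 ha] at hzero
    simp_all
  obtain ⟨l, hl⟩ : ∃ l, DirectSum.decompose 𝒜 b l ≠ 0 := by
    by_contra! hzero
    refine hb0 ((DirectSum.decompose 𝒜).injective ?_)
    rw [DirectSum.decompose_zero]
    exact DFinsupp.ext hzero
  refine ⟨l, eq_add l hl, ?_⟩
  rw [← DirectSum.sum_support_decompose 𝒜 b]
  refine sum_mem fun l' hl' => ?_
  obtain rfl : l' = l :=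
    add_left_cancel ((eq_add l' (DFinsupp.mem_support_iff.1 hl')).symm.trans (eq_add l hl))
  exact SetLike.coe_mem _

section Multidegree

variable {k : Type} [CommRing k] {m n : ℕ} {u v : Fin n → ℕ} {f g : PtRing k n}

/-- `f` is multihomogeneous of multidegree `v`, i.e. of degree `v i` in `x_i, y_i` for every `i`. -/
abbrev IsMultihomogeneous (f : PtRing k n) (v : Fin n → ℕ) : Prop :=
  IsWeightedHomogeneous (fun p : Fin n × Fin 2 => Finsupp.single p.1 1) f
    (Finsupp.equivFunOnFinite.symm v)

theorem weight_single_fst_apply (d : Fin n × Fin 2 →₀ ℕ) (i : Fin n) :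
    Finsupp.weight (fun p : Fin n × Fin 2 => Finsupp.single p.1 1) d i = d (i, 0) + d (i, 1) := by
  simp [Finsupp.weight_apply, Finsupp.sum_fintype, Fintype.sum_prod_type, Finsupp.single_apply,
    Finset.sum_add_distrib]

theorem IsMultihomogeneous.mul (hf : IsMultihomogeneous f u) (hg : IsMultihomogeneous g v) :
    IsMultihomogeneous (f * g) (u + v) := by
  convert! IsWeightedHomogeneous.mul hf hg
  ext i
  simp

theorem isMultihomogeneous_X (i : Fin n) (j : Fin 2) :
    IsMultihomogeneous (X (i, j) : PtRing k n) (Pi.single i 1) := by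
  convert isWeightedHomogeneous_X k (fun p : Fin n × Fin 2 => Finsupp.single p.1 1) (i, j)
  simp

theorem isMultihomogeneous_bracket (a b : Fin n) :
    IsMultihomogeneous (bracket k n a b) (Pi.single a 1 + Pi.single b 1) := by
  refine ((isMultihomogeneous_X a 0).mul (isMultihomogeneous_X b 1)).sub ?_
  rw [add_comm]
  exact (isMultihomogeneous_X b 0).mul (isMultihomogeneous_X a 1)

theorem weight_mapDomain {σ τ M N : Type*} [AddCommMonoid M] [AddCommMonoid N] (φ : σ → τ)
    (w : σ → M) (w' : τ → N) (L : M →+ N) (h : ∀ i, w' (φ i) = L (w i)) (d : σ →₀ ℕ) :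
    Finsupp.weight w' (d.mapDomain φ) = L (Finsupp.weight w d) := by
  induction d using Finsupp.induction_linear with
  | zero => simp
  | add d e hd he => simp only [Finsupp.mapDomain_add, map_add, hd, he]
  | single i c => simp only [Finsupp.mapDomain_single, Finsupp.weight_single, h, map_nsmul]

theorem IsMultihomogeneous.rename (π : Fin n → Fin m) (hf : IsMultihomogeneous f v) :
    IsMultihomogeneous (rename (Prod.map π id) f) fun j => ∑ i with π i = j, v i := by
  intro d hd
  obtain ⟨e, rfl, he⟩ := coeff_rename_ne_zero _ _ _ hd
  rw [weight_mapDomain _ (fun p => Finsupp.single p.1 1) _ (Finsupp.mapDomain.addMonoidHom π)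
    (by simp), hf he]
  ext j
  simp [Finsupp.mapDomain, Finsupp.sum_fintype, Finsupp.single_apply, Finset.sum_filter]

attribute [local instance] MvPolynomial.weightedGradedAlgebra in
theorem IsMultihomogeneous.of_mul [IsDomain k] (hf : IsMultihomogeneous f u) (hf0 : f ≠ 0)
    (hfg : IsMultihomogeneous (f * g) v) (hg0 : g ≠ 0) :
    ∃ w, v = u + w ∧ IsMultihomogeneous g w := by
  obtain ⟨w, hw, hg⟩ :=
    exists_mem_graded_of_mul_mem (weightedHomogeneousSubmodule k _) hf hf0 hfg hg0
  refine ⟨w, ?_, ?_⟩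
  · ext i
    simpa using DFunLike.congr_fun hw i
  · rwa [IsMultihomogeneous, Finsupp.equivFunOnFinite_symm_coe]

end Multidegree

section Invariant

variable {k : Type} [CommRing k] {m n : ℕ} {u v : Fin n → ℕ} {f g : PtRing k n}

/-- `f` is invariant under the action of `SL₂(k)` by substitution. -/
def IsSL2Invariant (f : PtRing k n) : Prop :=
  ∀ g : Matrix.SpecialLinearGroup (Fin 2) k, subst k n g f = f

theorem mem_Rv_iff : f ∈ Rv k n v ↔ IsSL2Invariant f ∧ IsMultihomogeneous f v := by
  simp [Rv, IsSL2Invariant, sub_eq_zero]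

theorem isSL2Invariant_bracket (a b : Fin n) : IsSL2Invariant (bracket k n a b) := by
  intro g
  have hdet : (C (g 0 0) * C (g 1 1) - C (g 0 1) * C (g 1 0) : PtRing k n) = 1 := by
    rw [← C_mul, ← C_mul, ← C_sub, ← Matrix.det_fin_two, g.det_coe, C_1]
  simp only [bracket, map_sub, map_mul, subst, aeval_X, if_true, one_ne_zero, if_false]
  linear_combination (X (a, 0) * X (b, 1) - X (b, 0) * X (a, 1)) * hdet

theorem subst_rename (π : Fin n → Fin m) (g : Matrix (Fin 2) (Fin 2) k) (f : PtRing k n) :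
    subst k m g (rename (Prod.map π id) f) = rename (Prod.map π id) (subst k n g f) := by
  induction f using MvPolynomial.induction_on with
  | C a => simp [subst]
  | add p q hp hq => simp only [map_add, hp, hq]
  | mul_X p i hp =>
    simp only [map_mul, hp, rename_X]
    congr 1
    simp only [subst, aeval_X, Prod.map]
    split_ifs <;> simp_all

theorem mul_mem_Rv (hf : f ∈ Rv k n u) (hg : g ∈ Rv k n v) : f * g ∈ Rv k n (u + v) := by
  rw [mem_Rv_iff] at *
  exact ⟨fun h => by rw [map_mul, hf.1, hg.1], hf.2.mul hg.2⟩

theorem bracket_mem_Rv (a b : Fin n) : bracket k n a b ∈ Rv k n (Pi.single a 1 + Pi.single b 1) :=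
  mem_Rv_iff.2 ⟨isSL2Invariant_bracket a b, isMultihomogeneous_bracket a b⟩

theorem rename_mem_Rv (π : Fin n → Fin m) (hf : f ∈ Rv k n v) :
    rename (Prod.map π id) f ∈ Rv k m fun j => ∑ i with π i = j, v i := by
  rw [mem_Rv_iff] at *
  exact ⟨fun g => by rw [subst_rename, hf.1], hf.2.rename π⟩

theorem exists_mem_Rv_of_mul_mem_Rv [IsDomain k] (hf : f ∈ Rv k n u) (hf0 : f ≠ 0)
    (hfg : f * g ∈ Rv k n v) (hg0 : g ≠ 0) : ∃ w, v = u + w ∧ g ∈ Rv k n w := by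
  rw [mem_Rv_iff] at hf hfg
  obtain ⟨w, hw, hg⟩ := hf.2.of_mul hf0 hfg.2 hg0
  refine ⟨w, hw, mem_Rv_iff.2 ⟨fun h => mul_left_cancel₀ hf0 ?_, hg⟩⟩
  rw [← hfg.1 h, map_mul, hf.1 h]

theorem Rv_zero : Rv k n 0 = k ∙ (1 : PtRing k n) := by
  ext f
  rw [Submodule.mem_span_singleton, mem_Rv_iff]
  constructor
  · rintro ⟨-, hf⟩
    refine ⟨coeff 0 f, ?_⟩
    rw [← Algebra.algebraMap_eq_smul_one, algebraMap_eq]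
    refine (IsWeightedHomogeneous.eq_monomial_of_unique_weight hf fun d hd => ?_).symm
    ext ⟨i, j⟩
    have hi := weight_single_fst_apply d i
    rw [hd, Finsupp.equivFunOnFinite_symm_apply_apply, Pi.zero_apply] at hi
    fin_cases j
    · exact Nat.eq_zero_of_add_eq_zero_right hi.symm
    · exact Nat.eq_zero_of_add_eq_zero_left hi.symm
  · rintro ⟨c, rfl⟩
    rw [← Algebra.algebraMap_eq_smul_one]
    exact ⟨fun g => AlgHom.commutes _ c, by
      convert! isWeightedHomogeneous_C (M := Fin n →₀ ℕ) _ c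
      ext i
      simp⟩

theorem eval_subst (g : Matrix (Fin 2) (Fin 2) k)
    (z : Fin n × Fin 2 → k) (f : PtRing k n) :
    eval z (subst k n g f) = eval (fun p => z (p.1, 0) * g 0 p.2 + z (p.1, 1) * g 1 p.2) f := by
  induction f using MvPolynomial.induction_on with
  | C a => simp [subst]
  | add p q hp hq => simp only [map_add, hp, hq]
  | mul_X p i hp =>
    obtain ⟨i, j⟩ := i
    rw [map_mul, map_mul, hp, map_mul]
    fin_cases j <;> simp [subst, mul_comm]

-- `SL₂` acts transitively on the nonzero vectors, so an invariant of a single vector is constant.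
theorem Rv_one_point_eq_bot {k : Type} [Field k] [Infinite k] {v : Fin 1 → ℕ} (hv : v 0 ≠ 0) :
    Rv k 1 v = ⊥ := by
  refine (Submodule.eq_bot_iff _).2 fun f hf => ?_
  obtain ⟨hinv, hhom⟩ := mem_Rv_iff.1 hf
  let e : Fin 1 × Fin 2 → k := fun p => ![1, 0] p.2
  have heval (z : Fin 1 × Fin 2 → k) (hz : z (0, 0) ≠ 0) : eval z f = eval e f := by
    have hcop : IsCoprime (z (0, 0)) (z (0, 1)) := ⟨(z (0, 0))⁻¹, 0, by simp [hz]⟩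
    obtain ⟨g, hg0, hg1⟩ := hcop.exists_SL2_row 0
    have hgz : (fun p => e (p.1, 0) * (g : Matrix (Fin 2) (Fin 2) k) 0 p.2 +
        e (p.1, 1) * g 1 p.2) = z := by
      ext ⟨i, j⟩
      fin_cases i
      fin_cases j <;> simp [e, hg0, hg1]
    rw [← hgz, ← eval_subst, hinv]
  have hconst : X (0, 0) * (f - C (eval e f)) = 0 := by
    refine MvPolynomial.funext fun z => ?_
    obtain hz | hz := eq_or_ne (z (0, 0)) 0
    · simp [hz]
    · simp [heval z hz]
  have hfc : f = C (eval e f) := by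
    simpa [sub_eq_zero] using hconst
  by_contra hf0
  have hdeg := hhom.inj_right hf0 (hfc ▸ isWeightedHomogeneous_C _ _)
  exact hv (DFunLike.congr_fun hdeg 0)

end Invariant

section Graph

variable {k : Type} [CommRing k] {m n : ℕ} {v : Fin n → ℕ}

theorem valence_cons (e : Fin n × Fin n) (Γ : Multiset (Fin n × Fin n)) :
    valence n (e ::ₘ Γ) = Pi.single e.1 1 + Pi.single e.2 1 + valence n Γ := by
  ext i
  simp only [valence, Multiset.map_cons, Multiset.count_cons, Pi.add_apply, Pi.single_apply]
  ring

theorem valence_cons_swap (a b : Fin n) (Γ : Multiset (Fin n × Fin n)) :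
    valence n ((a, b) ::ₘ Γ) = valence n ((b, a) ::ₘ Γ) := by
  rw [valence_cons, valence_cons, add_comm (Pi.single a 1)]

theorem graphMonomial_cons (e : Fin n × Fin n) (Γ : Multiset (Fin n × Fin n)) :
    graphMonomial k n (e ::ₘ Γ) = bracket k n e.1 e.2 * graphMonomial k n Γ := by
  simp [graphMonomial]

theorem graphMonomial_mem_Rv (Γ : Multiset (Fin n × Fin n)) :
    graphMonomial k n Γ ∈ Rv k n (valence n Γ) := by
  induction Γ using Multiset.induction with
  | empty =>
    rw [show valence n 0 = 0 from rfl, Rv_zero]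
    exact Submodule.mem_span_singleton_self 1
  | cons e Γ ih =>
    rw [graphMonomial_cons, valence_cons]
    exact mul_mem_Rv (bracket_mem_Rv _ _) ih

theorem rename_graphMonomial (π : Fin n → Fin m) (Γ : Multiset (Fin n × Fin n)) :
    rename (Prod.map π id) (graphMonomial k n Γ) =
      graphMonomial k m (Γ.map (Prod.map π π)) := by
  simp [graphMonomial, bracket, map_multiset_prod, Multiset.map_map]

/-- The span of the graph monomials of multidegree `v`. -/
noncomputable def graphSpan (k : Type) [CommRing k] (n : ℕ) (v : Fin n → ℕ) :
    Submodule k (PtRing k n) :=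
  Submodule.span k (graphMonomial k n '' {Γ | valence n Γ = v})

theorem graphMonomial_mem_graphSpan (Γ : Multiset (Fin n × Fin n)) :
    graphMonomial k n Γ ∈ graphSpan k n (valence n Γ) :=
  Submodule.subset_span ⟨Γ, rfl, rfl⟩

theorem graphSpan_le_Rv : graphSpan k n v ≤ Rv k n v := by
  rw [graphSpan, Submodule.span_le, Set.image_subset_iff]
  rintro Γ rfl
  exact graphMonomial_mem_Rv Γ

theorem graphSpan_zero : graphSpan k n 0 = Rv k n 0 := by
  refine graphSpan_le_Rv.antisymm ?_
  rw [Rv_zero, Submodule.span_singleton_le_iff_mem]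
  exact graphMonomial_mem_graphSpan 0

end Graph

section AddPoint

variable {k : Type} [CommRing k] {n : ℕ} {v : Fin n → ℕ}

/-- The inclusion of the polynomial ring of `n` points into that of `n + 1` points, the new point
being the last one. -/
noncomputable def addPoint (k : Type) [CommRing k] (n : ℕ) : PtRing k n →ₐ[k] PtRing k (n + 1) :=
  rename (Prod.map Fin.castSucc id)

/-- Specialization of the last of `n + 1` points to the point `a`. -/
noncomputable def mergeLast (k : Type) [CommRing k] {n : ℕ} (a : Fin n) :
    PtRing k (n + 1) →ₐ[k] PtRing k n :=
  rename (Prod.map (Fin.lastCases a id) id)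

/-- Addition of a last point joined to `a` by an edge: multiplication by the bracket of these two
points. -/
noncomputable def attachLast (k : Type) [CommRing k] {n : ℕ} (a : Fin n) :
    PtRing k n →ₗ[k] PtRing k (n + 1) :=
  LinearMap.mulLeft k (bracket k (n + 1) (Fin.last n) a.castSucc) ∘ₗ (addPoint k n).toLinearMap

theorem mergeLast_addPoint (a : Fin n) (f : PtRing k n) : mergeLast k a (addPoint k n f) = f := by
  rw [mergeLast, addPoint, rename_rename, Prod.map_comp_map]
  convert! rename_id_apply f
  ext p <;> simp

theorem mergeLast_X_last (a : Fin n) (j : Fin 2) :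
    mergeLast k a (X (Fin.last n, j)) = X (a, j) := by
  simp [mergeLast]

theorem addPoint_injective : Function.Injective (addPoint k n) :=
  rename_injective _ ((Fin.castSucc_injective n).prodMap Function.injective_id)

theorem snoc_add_snoc (u v : Fin n → ℕ) (c d : ℕ) :
    (Fin.snoc (u + v) (c + d) : Fin (n + 1) → ℕ) = Fin.snoc u c + Fin.snoc v d := by
  ext i
  cases i using Fin.lastCases <;> simp

theorem snoc_single_zero (a : Fin n) :
    (Fin.snoc (Pi.single a 1) 0 : Fin (n + 1) → ℕ) = Pi.single a.castSucc 1 := by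
  ext i
  cases i using Fin.lastCases <;> simp [Pi.single_apply]

theorem snoc_zero_one : (Fin.snoc 0 1 : Fin (n + 1) → ℕ) = Pi.single (Fin.last n) 1 := by
  ext i
  cases i using Fin.lastCases <;> simp

theorem addPoint_mem_Rv {f : PtRing k n} (hf : f ∈ Rv k n v) :
    addPoint k n f ∈ Rv k (n + 1) (Fin.snoc v 0) := by
  have hv : (Fin.snoc v 0 : Fin (n + 1) → ℕ) = fun j => ∑ i with Fin.castSucc i = j, v i := by
    ext j
    cases j using Fin.lastCases <;> simp [Finset.sum_filter]
  rw [hv]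
  exact rename_mem_Rv Fin.castSucc hf

theorem mergeLast_mem_Rv (a : Fin n) {c : ℕ} {f : PtRing k (n + 1)}
    (hf : f ∈ Rv k (n + 1) (Fin.snoc v c)) : mergeLast k a f ∈ Rv k n (v + Pi.single a c) := by
  have hv : v + Pi.single a c =
      fun j => ∑ i with Fin.lastCases a id i = j, (Fin.snoc v c : Fin (n + 1) → ℕ) i := by
    ext j
    simp [Finset.sum_filter, Fin.sum_univ_castSucc, Pi.single_apply, eq_comm (a := a)]
  rw [hv]
  exact rename_mem_Rv _ hf

theorem attachLast_mem_Rv (a : Fin n) {f : PtRing k n} (hf : f ∈ Rv k n v) :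
    attachLast k a f ∈ Rv k (n + 1) (Fin.snoc (v + Pi.single a 1) 1) := by
  convert! mul_mem_Rv (bracket_mem_Rv (Fin.last n) a.castSucc) (addPoint_mem_Rv hf) using 1
  rw [← snoc_zero_one, ← snoc_single_zero, ← snoc_add_snoc, ← snoc_add_snoc]
  simp [add_comm]

theorem bracket_ne_zero [Nontrivial k] {a b : Fin n} (h : a ≠ b) : bracket k n a b ≠ 0 := by
  intro hzero
  have heval := congrArg (eval fun p => if p = (a, 0) ∨ p = (b, 1) then 1 else 0) hzero
  simp [bracket, h, h.symm] at heval

theorem attachLast_injective [IsDomain k] (a : Fin n) : Function.Injective (attachLast k a) :=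
  (mul_right_injective₀ (bracket_ne_zero a.castSucc_lt_last.ne')).comp addPoint_injective

theorem mergeLast_attachLast (a : Fin n) (f : PtRing k n) :
    mergeLast k a (attachLast k a f) = 0 := by
  simp [attachLast, bracket, mergeLast]

theorem IsMultihomogeneous.exists_eq_X_last_mul_add {f : PtRing k (n + 1)}
    (hf : IsMultihomogeneous f (Fin.snoc v 1)) : ∃ g h,
      f = X (Fin.last n, 0) * addPoint k n g + X (Fin.last n, 1) * addPoint k n h := by
  induction hf using IsWeightedHomogeneous.induction_on with
  | zero => exact ⟨0, 0, by simp⟩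
  | add p q _ _ hp hq =>
    obtain ⟨g, h, rfl⟩ := hp
    obtain ⟨g', h', rfl⟩ := hq
    exact ⟨g + g', h + h', by simp only [map_add]; ring⟩
  | monomial d r hd =>
    have hlast : d (Fin.last n, 0) + d (Fin.last n, 1) = 1 := by
      rw [← weight_single_fst_apply, hd]
      simp
    let g : PtRing k n :=
      C r * ∏ i, (X (i, 0) ^ d (i.castSucc, 0) * X (i, 1) ^ d (i.castSucc, 1))
    have hg : monomial d r = addPoint k n g *
        (X (Fin.last n, 0) ^ d (Fin.last n, 0) * X (Fin.last n, 1) ^ d (Fin.last n, 1)) := by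
      rw [monomial_eq, Finsupp.prod_fintype _ _ fun _ => pow_zero _, Fintype.prod_prod_type,
        Fin.prod_univ_castSucc]
      simp [g, addPoint, mul_assoc]
    obtain ⟨h0, h1⟩ | ⟨h0, h1⟩ := Nat.add_eq_one_iff.1 hlast
    · exact ⟨0, g, by rw [hg, h0, h1]; simp [mul_comm]⟩
    · exact ⟨g, 0, by rw [hg, h0, h1]; simp [mul_comm]⟩

theorem IsMultihomogeneous.mem_range_attachLast [IsDomain k] {a : Fin n} {f : PtRing k (n + 1)}
    (hf : IsMultihomogeneous f (Fin.snoc v 1)) (hmerge : mergeLast k a f = 0) :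
    f ∈ (attachLast k a).range := by
  obtain ⟨g, h, rfl⟩ := hf.exists_eq_X_last_mul_add
  have hgh : X (a, 0) * g + X (a, 1) * h = 0 := by
    simpa only [map_add, map_mul, mergeLast_addPoint, mergeLast_X_last] using hmerge
  obtain ⟨q, rfl⟩ : (X (a, 1) : PtRing k n) ∣ g := by
    have hdvd : (X (a, 1) : PtRing k n) ∣ X (a, 0) * g := ⟨-h, by linear_combination hgh⟩
    exact (X_prime.dvd_or_dvd hdvd).resolve_left (by simp)
  obtain rfl : h = -(X (a, 0) * q) :=
    mul_left_cancel₀ (X_ne_zero (a, 1)) (by linear_combination hgh)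
  refine ⟨q, ?_⟩
  change bracket k (n + 1) (Fin.last n) a.castSucc * addPoint k n q = _
  simp only [bracket, addPoint, map_mul, map_neg, rename_X, Prod.map_apply, id_eq]
  ring

theorem exists_attachLast_eq [IsDomain k] {a : Fin n} {f : PtRing k (n + 1)}
    (hf : f ∈ Rv k (n + 1) (Fin.snoc v 1)) (hf0 : f ≠ 0) (hmerge : mergeLast k a f = 0) :
    ∃ u, v = u + Pi.single a 1 ∧ ∃ q ∈ Rv k n u, attachLast k a q = f := by
  obtain ⟨q, rfl⟩ := (mem_Rv_iff.1 hf).2.mem_range_attachLast hmerge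
  obtain ⟨w, hw, hq⟩ := exists_mem_Rv_of_mul_mem_Rv (bracket_mem_Rv _ _)
    (bracket_ne_zero a.castSucc_lt_last.ne') hf (right_ne_zero_of_mul hf0)
  have hv (i : Fin n) : v i = (Pi.single a 1 : Fin n → ℕ) i + w i.castSucc := by
    simpa [Pi.single_apply] using congrFun hw i.castSucc
  have hlast : w (Fin.last n) = 0 := by
    simpa using congrFun hw (Fin.last n)
  rw [← Fin.snoc_init_self w, hlast] at hq
  refine ⟨Fin.init w, funext fun i => (hv i).trans (add_comm _ _), q, ?_, rfl⟩
  simpa [mergeLast_addPoint] using mergeLast_mem_Rv a hq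

end AddPoint

section Spanning

variable {k : Type} {n : ℕ} {v : Fin n → ℕ}

theorem valence_map_castSucc (Γ : Multiset (Fin n × Fin n)) :
    valence (n + 1) (Γ.map (Prod.map Fin.castSucc Fin.castSucc)) = Fin.snoc (valence n Γ) 0 := by
  induction Γ using Multiset.induction with
  | empty =>
    ext i
    cases i using Fin.lastCases <;> simp [valence]
  | cons e Γ ih =>
    rw [Multiset.map_cons, valence_cons, ih, valence_cons, Prod.map_fst, Prod.map_snd,
      ← snoc_single_zero, ← snoc_single_zero, ← snoc_add_snoc, ← snoc_add_snoc]

theorem valence_last_cons_map_castSucc (b : Fin n) (Γ : Multiset (Fin n × Fin n)) :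
    valence (n + 1)
      ((Fin.last n, b.castSucc) ::ₘ Γ.map (Prod.map Fin.castSucc Fin.castSucc)) =
        Fin.snoc (Pi.single b 1 + valence n Γ) 1 := by
  rw [valence_cons, valence_map_castSucc, ← snoc_zero_one, ← snoc_single_zero, ← snoc_add_snoc,
    ← snoc_add_snoc, zero_add, add_zero]

theorem addPoint_graphMonomial [CommRing k] (Γ : Multiset (Fin n × Fin n)) :
    addPoint k n (graphMonomial k n Γ) =
      graphMonomial k (n + 1) (Γ.map (Prod.map Fin.castSucc Fin.castSucc)) :=
  rename_graphMonomial Fin.castSucc Γ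

theorem map_attachLast_graphSpan_le [CommRing k] (a : Fin n) :
    (graphSpan k n v).map (attachLast k a) ≤
      graphSpan k (n + 1) (Fin.snoc (v + Pi.single a 1) 1) := by
  rw [graphSpan, Submodule.map_span_le]
  rintro _ ⟨Γ, rfl, rfl⟩
  have hattach : attachLast k a (graphMonomial k n Γ) = graphMonomial k (n + 1)
      ((Fin.last n, a.castSucc) ::ₘ Γ.map (Prod.map Fin.castSucc Fin.castSucc)) := by
    rw [graphMonomial_cons, ← addPoint_graphMonomial]
    rfl
  rw [hattach, add_comm (valence n Γ), ← valence_last_cons_map_castSucc]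
  exact graphMonomial_mem_graphSpan _

theorem exists_edge_of_valence_ne_zero (Γ : Multiset (Fin n × Fin n)) {a : Fin n}
    (ha : valence n Γ a ≠ 0) : ∃ b, (a, b) ∈ Γ ∨ (b, a) ∈ Γ := by
  have hmem : a ∈ Γ.map Prod.fst ∨ a ∈ Γ.map Prod.snd := by
    simpa [valence, imp_iff_not_or, Multiset.count_ne_zero] using ha
  simpa [← exists_or] using hmem

theorem map_lastCases_map_castSucc (a : Fin n) (Γ : Multiset (Fin n × Fin n)) :
    (Γ.map (Prod.map Fin.castSucc Fin.castSucc)).map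
      (Prod.map (Fin.lastCases a id) (Fin.lastCases a id)) = Γ := by
  rw [Multiset.map_map]
  convert! Multiset.map_id Γ
  ext e <;> simp

-- One endpoint `a` of an edge of `Γ` is moved to the last point.
theorem exists_valence_eq_snoc_one {Γ : Multiset (Fin n × Fin n)} {a : Fin n}
    (hΓ : valence n Γ = v + Pi.single a 1) : ∃ Δ, valence (n + 1) Δ = Fin.snoc v 1 ∧
      Δ.map (Prod.map (Fin.lastCases a id) (Fin.lastCases a id)) = Γ := by
  have hv {b : Fin n} {Γ' : Multiset (Fin n × Fin n)}
      (h : valence n ((a, b) ::ₘ Γ') = v + Pi.single a 1) : Pi.single b 1 + valence n Γ' = v := by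
    rw [valence_cons, add_assoc, add_comm] at h
    exact add_right_cancel h
  obtain ⟨b, hab | hba⟩ := exists_edge_of_valence_ne_zero Γ (a := a) (by simp [hΓ])
  · obtain ⟨Γ, rfl⟩ := Multiset.exists_cons_of_mem hab
    refine ⟨(Fin.last n, b.castSucc) ::ₘ Γ.map (Prod.map Fin.castSucc Fin.castSucc), ?_, ?_⟩
    · rw [valence_last_cons_map_castSucc, hv hΓ]
    · rw [Multiset.map_cons, map_lastCases_map_castSucc]
      simp
  · obtain ⟨Γ, rfl⟩ := Multiset.exists_cons_of_mem hba
    rw [valence_cons_swap] at hΓ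
    refine ⟨(b.castSucc, Fin.last n) ::ₘ Γ.map (Prod.map Fin.castSucc Fin.castSucc), ?_, ?_⟩
    · rw [valence_cons_swap, valence_last_cons_map_castSucc, hv hΓ]
    · rw [Multiset.map_cons, map_lastCases_map_castSucc]
      simp

theorem graphSpan_le_map_mergeLast [CommRing k] (a : Fin n) :
    graphSpan k n (v + Pi.single a 1) ≤
      (graphSpan k (n + 1) (Fin.snoc v 1)).map (mergeLast k a).toLinearMap := by
  rw [graphSpan, Submodule.span_le]
  rintro _ ⟨Γ, hΓ, rfl⟩
  obtain ⟨Δ, hΔ, rfl⟩ := exists_valence_eq_snoc_one hΓ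
  rw [← rename_graphMonomial]
  exact Submodule.mem_map_of_mem (hΔ ▸ graphMonomial_mem_graphSpan Δ)

theorem graphSpan_snoc_one_eq_Rv [CommRing k] [IsDomain k] (a : Fin n)
    (hmerge : graphSpan k n (v + Pi.single a 1) = Rv k n (v + Pi.single a 1))
    (hattach : ∀ u, v = u + Pi.single a 1 → graphSpan k n u = Rv k n u) :
    graphSpan k (n + 1) (Fin.snoc v 1) = Rv k (n + 1) (Fin.snoc v 1) := by
  refine graphSpan_le_Rv.antisymm fun f hf => ?_
  obtain ⟨g, hg, hgf⟩ : mergeLast k a f ∈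
      (graphSpan k (n + 1) (Fin.snoc v 1)).map (mergeLast k a).toLinearMap :=
    graphSpan_le_map_mergeLast a (hmerge ▸ mergeLast_mem_Rv a hf)
  rw [← sub_add_cancel f g]
  refine add_mem ?_ hg
  by_cases hfg : f - g = 0
  · rw [hfg]
    exact zero_mem _
  obtain ⟨u, rfl, q, hq, hqf⟩ := exists_attachLast_eq (a := a)
    (sub_mem hf (graphSpan_le_Rv hg)) hfg (by rw [map_sub, sub_eq_zero]; exact hgf.symm)
  rw [← hqf]
  exact map_attachLast_graphSpan_le a (Submodule.mem_map_of_mem (hattach u rfl ▸ hq))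

end Spanning

section Hook

/-- The multidegree `(w, 1, …, 1)` on `n + 1` points. -/
def hook (n w : ℕ) : Fin (n + 1) → ℕ :=
  Fin.cons w 1

theorem hook_zero_zero : hook 0 0 = 0 := by
  ext i
  cases i using Fin.cases with
  | zero => rfl
  | succ i => exact i.elim0

theorem hook_one (n : ℕ) : hook n 1 = 1 := by
  ext i
  cases i using Fin.cases <;> rfl

theorem snoc_hook_one (n w : ℕ) : (Fin.snoc (hook n w) 1 : Fin (n + 2) → ℕ) = hook (n + 1) w := by
  rw [hook, ← Fin.cons_snoc_eq_snoc_cons]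
  congr
  ext i
  cases i using Fin.lastCases <;> simp

theorem hook_add_single (n w c : ℕ) : hook n w + Pi.single 0 c = hook n (w + c) := by
  ext i
  cases i using Fin.cases <;> simp [hook]

theorem exists_eq_hook_of_hook_eq_add_single {n w c : ℕ} {u : Fin (n + 1) → ℕ}
    (hu : hook n w = u + Pi.single 0 c) : ∃ w', u = hook n w' := by
  refine ⟨u 0, funext fun i => ?_⟩
  cases i using Fin.cases with
  | zero => rfl
  | succ i => simpa [hook] using (congrFun hu i.succ).symm

theorem graphSpan_hook_eq_Rv (k : Type) [Field k] [Infinite k] (n w : ℕ) :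
    graphSpan k (n + 1) (hook n w) = Rv k (n + 1) (hook n w) := by
  induction n generalizing w with
  | zero =>
    cases w with
    | zero => rw [hook_zero_zero, graphSpan_zero]
    | succ w =>
      have hbot : Rv k 1 (hook 0 (w + 1)) = ⊥ := Rv_one_point_eq_bot w.succ_ne_zero
      exact graphSpan_le_Rv.antisymm (hbot ▸ bot_le)
  | succ n ih =>
    rw [← snoc_hook_one]
    refine graphSpan_snoc_one_eq_Rv 0 (hook_add_single n w 1 ▸ ih _) fun u hu => ?_
    obtain ⟨w', rfl⟩ := exists_eq_hook_of_hook_eq_add_single hu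
    exact ih w'

end Hook

section Rank

theorem rank_map_add_rank_inf_ker.{u, v, w} {R : Type u} {V : Type v} {W : Type w} [Ring R]
    [HasRankNullity.{v} R] [AddCommGroup V] [Module R V] [AddCommGroup W] [Module R W]
    (S : Submodule R V) (L : V →ₗ[R] W) :
    Cardinal.lift.{v} (Module.rank R (S.map L)) + Cardinal.lift.{w} (Module.rank R ↥(S ⊓ L.ker)) =
      Cardinal.lift.{w} (Module.rank R S) := by
  have hrange := (L.domRestrict S).lift_rank_range_add_rank_ker
  have hker : Module.rank R ↥(S ⊓ L.ker) = Module.rank R (L.domRestrict S).ker := by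
    rw [LinearMap.ker_domRestrict, ← Submodule.map_comap_subtype]
    exact (Submodule.equivSubtypeMap S _).rank_eq.symm
  rwa [LinearMap.range_domRestrict, ← hker] at hrange

variable {k : Type} [CommRing k] {n : ℕ} {v : Fin n → ℕ}

theorem rank_Rv_zero (k : Type) [CommRing k] [IsDomain k] (n : ℕ) :
    Module.rank k (Rv k n 0) = 1 := by
  rw [Rv_zero, ← (LinearEquiv.toSpanNonzeroSingleton k (PtRing k n) 1 one_ne_zero).rank_eq,
    Module.rank_self]

theorem map_mergeLast_Rv {a : Fin n}
    (h : graphSpan k n (v + Pi.single a 1) = Rv k n (v + Pi.single a 1)) :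
    (Rv k (n + 1) (Fin.snoc v 1)).map (mergeLast k a).toLinearMap =
      Rv k n (v + Pi.single a 1) := by
  refine le_antisymm ?_ ?_
  · rintro _ ⟨f, hf, rfl⟩
    exact mergeLast_mem_Rv a hf
  · rw [← h]
    exact (graphSpan_le_map_mergeLast a).trans (Submodule.map_mono graphSpan_le_Rv)

theorem Rv_inf_ker_mergeLast [IsDomain k] (a : Fin n) (u : Fin n → ℕ) :
    Rv k (n + 1) (Fin.snoc (u + Pi.single a 1) 1) ⊓ LinearMap.ker (mergeLast k a).toLinearMap =
      (Rv k n u).map (attachLast k a) := by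
  refine le_antisymm ?_ ?_
  · rintro f ⟨hf, hmerge⟩
    obtain rfl | hf0 := eq_or_ne f 0
    · exact zero_mem _
    obtain ⟨u', hu, q, hq, rfl⟩ := exists_attachLast_eq hf hf0 hmerge
    obtain rfl := add_right_cancel hu
    exact Submodule.mem_map_of_mem hq
  · rintro _ ⟨q, hq, rfl⟩
    exact ⟨attachLast_mem_Rv a hq, mergeLast_attachLast a q⟩

theorem Rv_inf_ker_mergeLast_eq_bot [IsDomain k] {a : Fin n} (hv : v a = 0) :
    Rv k (n + 1) (Fin.snoc v 1) ⊓ LinearMap.ker (mergeLast k a).toLinearMap = ⊥ := by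
  refine (Submodule.eq_bot_iff _).2 fun f ⟨hf, hmerge⟩ => ?_
  by_contra hf0
  obtain ⟨u, rfl, -⟩ := exists_attachLast_eq hf hf0 hmerge
  simp at hv

theorem rank_Rv_snoc_one_of_apply_eq_zero {k : Type} [Field k] {a : Fin n} (hv : v a = 0)
    (h : graphSpan k n (v + Pi.single a 1) = Rv k n (v + Pi.single a 1)) :
    Module.rank k (Rv k (n + 1) (Fin.snoc v 1)) = Module.rank k (Rv k n (v + Pi.single a 1)) := by
  have hrank := rank_map_add_rank_inf_ker (Rv k (n + 1) (Fin.snoc v 1))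
    (mergeLast k a).toLinearMap
  rw [map_mergeLast_Rv h, Rv_inf_ker_mergeLast_eq_bot hv, rank_bot] at hrank
  simpa using hrank.symm

theorem rank_Rv_snoc_add_single_one {k : Type} [Field k] {a : Fin n} {u : Fin n → ℕ}
    (hv : v = u + Pi.single a 1)
    (h : graphSpan k n (v + Pi.single a 1) = Rv k n (v + Pi.single a 1)) :
    Module.rank k (Rv k (n + 1) (Fin.snoc v 1)) =
      Module.rank k (Rv k n (v + Pi.single a 1)) + Module.rank k (Rv k n u) := by
  have hker : Module.rank k ((Rv k n u).map (attachLast k a)) = Module.rank k (Rv k n u) :=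
    (Submodule.equivMapOfInjective _ (attachLast_injective a) _).rank_eq.symm
  have hrank := rank_map_add_rank_inf_ker (Rv k (n + 1) (Fin.snoc v 1))
    (mergeLast k a).toLinearMap
  rw [map_mergeLast_Rv h, hv, Rv_inf_ker_mergeLast, hker, ← hv] at hrank
  simpa only [Cardinal.lift_id] using hrank.symm

end Rank

section Ballot

/-- The ballot number counting walks of `n` unit steps on `ℕ` from `w` to `0`. -/
def ballot : ℕ → ℕ → ℕ
  | 0, 0 => 1
  | 0, _ + 1 => 0
  | n + 1, 0 => ballot n 1
  | n + 1, w + 1 => ballot n (w + 2) + ballot n w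

theorem ballot_eq_zero {n w : ℕ} (h : n < w) : ballot n w = 0 := by
  induction n generalizing w with
  | zero =>
    obtain ⟨w, rfl⟩ := Nat.exists_eq_succ_of_ne_zero h.ne'
    rfl
  | succ n ih =>
    obtain ⟨w, rfl⟩ := Nat.exists_eq_succ_of_ne_zero (Nat.ne_zero_of_lt h)
    rw [ballot, ih (by lia), ih (by lia)]

-- The reflection principle, without subtraction: the second summand counts the walks leaving `ℕ`.
theorem ballot_add_choose {n w j : ℕ} (h : n = w + 2 * j) :
    ballot n w + n.choose (w + j + 1) = n.choose j := by
  induction n generalizing w j with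
  | zero =>
    obtain ⟨rfl, rfl⟩ : w = 0 ∧ j = 0 := by lia
    rfl
  | succ n ih =>
    cases w with
    | zero =>
      obtain ⟨j, rfl⟩ := Nat.exists_eq_succ_of_ne_zero (show j ≠ 0 by lia)
      have hup := ih (w := 1) (j := j) (by lia)
      rw [ballot, Nat.choose_succ_succ, Nat.choose_succ_succ]
      ring_nf at hup ⊢
      lia
    | succ w =>
      have hdown := ih (w := w) (j := j) (by lia)
      cases j with
      | zero =>
        obtain rfl : n = w := by lia
        simp_all [ballot, ballot_eq_zero]
      | succ j =>
        have hup := ih (w := w + 2) (j := j) (by lia)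
        rw [ballot, Nat.choose_succ_succ, Nat.choose_succ_succ]
        ring_nf at hdown hup ⊢
        lia

theorem ballot_two_mul_zero (m : ℕ) : ballot (2 * m) 0 = catalan m := by
  have hballot : ballot (2 * m) 0 + (2 * m).choose (m + 1) = (2 * m).choose m := by
    simpa using ballot_add_choose (zero_add (2 * m)).symm
  have hchoose : (2 * m).choose (m + 1) * (m + 1) = (2 * m).choose m * m := by
    rw [Nat.choose_succ_right_eq, two_mul, Nat.add_sub_cancel]
  refine Nat.eq_of_mul_eq_mul_left (Nat.add_one_pos m) ?_
  rw [succ_mul_catalan_eq_centralBinom, Nat.centralBinom_eq_two_mul_choose]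
  linear_combination (m + 1) * hballot - hchoose

end Ballot

theorem rank_Rv_hook_succ_zero (k : Type) [Field k] [Infinite k] (n : ℕ) :
    Module.rank k (Rv k (n + 2) (hook (n + 1) 0)) = Module.rank k (Rv k (n + 1) (hook n 1)) := by
  rw [← snoc_hook_one, rank_Rv_snoc_one_of_apply_eq_zero (a := 0), hook_add_single]
  · rfl
  · rw [hook_add_single, graphSpan_hook_eq_Rv]

theorem rank_Rv_hook_succ_succ (k : Type) [Field k] [Infinite k] (n w : ℕ) :
    Module.rank k (Rv k (n + 2) (hook (n + 1) (w + 1))) =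
      Module.rank k (Rv k (n + 1) (hook n (w + 2))) + Module.rank k (Rv k (n + 1) (hook n w)) := by
  rw [← snoc_hook_one, rank_Rv_snoc_add_single_one (hook_add_single n w 1).symm, hook_add_single]
  rw [hook_add_single, graphSpan_hook_eq_Rv]

theorem rank_Rv_hook (k : Type) [Field k] [Infinite k] (n w : ℕ) :
    Module.rank k (Rv k (n + 1) (hook n w)) = ballot n w := by
  induction n generalizing w with
  | zero =>
    cases w with
    | zero => rw [hook_zero_zero, rank_Rv_zero, ballot, Nat.cast_one]
    | succ w =>
      have hbot : Rv k 1 (hook 0 (w + 1)) = ⊥ := Rv_one_point_eq_bot w.succ_ne_zero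
      rw [hbot, rank_bot, ballot, Nat.cast_zero]
  | succ n ih =>
    cases w with
    | zero => rw [rank_Rv_hook_succ_zero, ih, ballot]
    | succ w => rw [rank_Rv_hook_succ_succ, ih, ih, ballot, Nat.cast_add]

theorem stmt10_general (k : Type) [Field k] [Infinite k] (m : ℕ) :
    Module.finrank k ↥(Rv k (2 * m) fun _ => 1) = catalan m := by
  refine Module.finrank_eq_of_rank_eq ?_
  rw [← ballot_two_mul_zero]
  cases m with
  | zero =>
    rw [show (fun _ : Fin (2 * 0) => 1) = 0 from Subsingleton.elim (α := Fin 0 → ℕ) _ _,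
      rank_Rv_zero, ballot, Nat.cast_one]
  | succ m =>
    have hrank := rank_Rv_hook k (2 * m + 1) 1
    rwa [hook_one] at hrank

/-- For six points, the space of invariants of multidegree `(1,1,1,1,1,1)` has dimension 5. -/
theorem stmt10 (k : Type) [Field k] [CharZero k] :
    Module.finrank k ↥(Rv k 6 fun _ => 1) = 5 :=
  (stmt10_general k 3).trans catalan_three
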